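/- There exist a real ρ > 1, positive reals η and r, an integer N and a real K with 0 < K < 1/8 such that for every n ≥ N and every x ∈ [−K, K], the probability that Z_n^x([−K, K]) > η·ρ^n is at least r. -/

import Mathlib

open MeasureTheory ProbabilityTheory

/-- Words over the alphabet `{1,2}` (represented as `Fin 2`), indexing the nodes of the
binary tree of the construction.  A word `i :: w` is a child of the word `w`. -/
abbrev LarssonWord := List (Fin 2)

/-- The left endpoint of the level-`w.length` interval of Larsson's random Cantor set
indexed by the word `w`, given the family `u` of (realized) uniform random variables.
The level-0 interval is `[0,1]`; if `I_w = [α, α + a^n]` is a level-`n` interval, its two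
level-`(n+1)` subintervals are `[α + a^n (b + U), α + a^n (b + U) + a^(n+1)]` and
`[α + a^n (1/2 + a/2 + U'), α + a^n (1/2 + a/2 + U') + a^(n+1)]`. -/
noncomputable def larssonLeft (a b : ℝ) (u : LarssonWord → ℝ) : LarssonWord → ℝ
  | [] => 0
  | (i :: w) => larssonLeft a b u w +
      a ^ w.length * ((if i = 0 then b else 1 / 2 + a / 2) + u (i :: w))

/-- `C^n`: the union of the `2^n` level-`n` intervals. -/
noncomputable def larssonLevel (a b : ℝ) (u : LarssonWord → ℝ) (n : ℕ) : Set ℝ :=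
  ⋃ w ∈ {w : LarssonWord | w.length = n},
    Set.Icc (larssonLeft a b u w) (larssonLeft a b u w + a ^ n)

/-- Larsson's random Cantor set `C = ⋂ n, C^n`. -/
noncomputable def larssonCantor (a b : ℝ) (u : LarssonWord → ℝ) : Set ℝ :=
  ⋂ n : ℕ, larssonLevel a b u n

/-- `Z_n^x(A)`: the number of pairs `(i, j)` of level-`n` words such that
`Φ(Q_{(i,j)}, x) = (u − v + x)/a^n ∈ A`, where `u` (resp. `v`) is the left endpoint of the
level-`n` interval of `C₁` (resp. `C₂`) indexed by `i` (resp. `j`). -/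
noncomputable def larssonZ (a b : ℝ) (u₁ u₂ : LarssonWord → ℝ) (n : ℕ) (x : ℝ)
    (A : Set ℝ) : ℕ :=
  Nat.card {p : LarssonWord × LarssonWord //
    p.1.length = n ∧ p.2.length = n ∧
    (larssonLeft a b u₁ p.1 - larssonLeft a b u₂ p.2 + x) / a ^ n ∈ A}


namespace LarssonAux

abbrev Idx := Bool × LarssonWord

noncomputable def wordsF (n : ℕ) : Finset LarssonWord := (List.finite_length_eq (Fin 2) n).toFinset

lemma mem_wordsF {n : ℕ} {w : LarssonWord} : w ∈ wordsF n ↔ w.length = n := by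
  simp [wordsF]

lemma card_wordsF (n : ℕ) : (wordsF n).card = 2 ^ n := by
  have h : Fintype.card (List.Vector (Fin 2) n) = 2 ^ n := by simp [card_vector]
  rw [← h, wordsF, ← Nat.card_eq_card_finite_toFinset, ← Nat.card_eq_fintype_card]
  rfl

noncomputable def pairsF (n : ℕ) : Finset (LarssonWord × LarssonWord) := wordsF n ×ˢ wordsF n

lemma mem_pairsF {n : ℕ} {p : LarssonWord × LarssonWord} :
    p ∈ pairsF n ↔ p.1.length = n ∧ p.2.length = n := by
  simp [pairsF, mem_wordsF]

noncomputable def LD (a b : ℝ) (u : Idx → ℝ) (p : LarssonWord × LarssonWord) : ℝ :=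
  larssonLeft a b (fun w => u (false, w)) p.1 - larssonLeft a b (fun w => u (true, w)) p.2

open Classical in
noncomputable def aliveF (a b K : ℝ) (n : ℕ) (x : ℝ) (u : Idx → ℝ) :
    Finset (LarssonWord × LarssonWord) :=
  (pairsF n).filter (fun p => |LD a b u p + x| ≤ K * a ^ n)

lemma mem_aliveF {a b K : ℝ} {n : ℕ} {x : ℝ} {u : Idx → ℝ} {p : LarssonWord × LarssonWord} :
    p ∈ aliveF a b K n x u ↔ (p.1.length = n ∧ p.2.length = n) ∧ |LD a b u p + x| ≤ K * a ^ n := by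
  simp [aliveF, mem_pairsF]

noncomputable def ZZ (a b K : ℝ) (n : ℕ) (x : ℝ) (u : Idx → ℝ) : ℕ := (aliveF a b K n x u).card

lemma larssonZ_eq {a b K : ℝ} (ha : 0 < a) (n : ℕ) (x : ℝ) (u : Idx → ℝ) :
    larssonZ a b (fun w => u (false, w)) (fun w => u (true, w)) n x (Set.Icc (-K) K)
      = ZZ a b K n x u := by
  unfold larssonZ ZZ
  rw [← Nat.card_eq_finsetCard]
  apply Nat.card_congr
  refine Equiv.subtypeEquivRight fun p => ?_
  have hpow : 0 < a ^ n := by positivity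
  rw [mem_aliveF, Set.mem_Icc, ← abs_le, abs_div, abs_of_pos hpow, div_le_iff₀ hpow, and_assoc]
  rfl

def shiftF (p : LarssonWord × LarssonWord) (u : Idx → ℝ) : Idx → ℝ :=
  fun c => u (c.1, c.2 ++ (if c.1 then p.2 else p.1))

lemma left_append (a b : ℝ) (u : LarssonWord → ℝ) (v w : LarssonWord) :
    larssonLeft a b u (v ++ w) = larssonLeft a b u w
      + a ^ w.length * larssonLeft a b (fun z => u (z ++ w)) v := by
  induction v with
  | nil => simp [larssonLeft]
  | cons i v ih =>
    simp only [List.cons_append, larssonLeft, ih, List.length_append, pow_add]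
    ring

lemma left_congr (a b : ℝ) {u u' : LarssonWord → ℝ} (w : LarssonWord)
    (h : ∀ v, v ≠ [] → v.length ≤ w.length → u v = u' v) :
    larssonLeft a b u w = larssonLeft a b u' w := by
  induction w with
  | nil => simp [larssonLeft]
  | cons i v ih =>
    simp only [larssonLeft]
    rw [ih (fun z hz hl => h z hz (by simp; omega)), h (i :: v) (by simp) (by simp)]

lemma LD_append (a b : ℝ) (u : Idx → ℝ) {n : ℕ} {p : LarssonWord × LarssonWord}
    (h1 : p.1.length = n) (h2 : p.2.length = n) (q : LarssonWord × LarssonWord) :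
    LD a b u (q.1 ++ p.1, q.2 ++ p.2) = LD a b u p + a ^ n * LD a b (shiftF p u) q := by
  simp only [LD, left_append, h1, h2, shiftF]
  simp
  ring

lemma LD_congr (a b : ℝ) {u u' : Idx → ℝ} (p : LarssonWord × LarssonWord)
    (h : ∀ c v, v ≠ [] → v.length ≤ max p.1.length p.2.length → u (c, v) = u' (c, v)) :
    LD a b u p = LD a b u' p := by
  unfold LD
  rw [left_congr a b p.1 (fun v hv hl => h false v hv (by omega)),
    left_congr a b p.2 (fun v hv hl => h true v hv (by omega))]

lemma aliveF_congr (a b K : ℝ) (n : ℕ) (x : ℝ) {u u' : Idx → ℝ}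
    (h : ∀ c v, v ≠ [] → v.length ≤ n → u (c, v) = u' (c, v)) :
    aliveF a b K n x u = aliveF a b K n x u' := by
  ext p
  simp only [mem_aliveF]
  refine and_congr_right fun hp => ?_
  rw [LD_congr a b p (u := u) (u' := u')]
  intro c v hv hl
  exact h c v hv (by omega)

/-- left endpoints of words lie in `[0, 1 - a^n]`. -/
lemma left_mem {a b t : ℝ} (ha : 0 < a) (hb : 0 < b) (ht : t = (1 - 3 * a - 2 * b) / 2)
    (ht0 : 0 < t) {u : LarssonWord → ℝ} (hu : ∀ w, u w ∈ Set.Icc 0 t) (w : LarssonWord) :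
    0 ≤ larssonLeft a b u w ∧ larssonLeft a b u w ≤ 1 - a ^ w.length := by
  induction w with
  | nil => simp [larssonLeft]
  | cons i v ih =>
    have h := hu (i :: v)
    have hp : 0 < a ^ v.length := by positivity
    simp only [larssonLeft, List.length_cons, pow_succ]
    have h1 : 0 ≤ (if i = 0 then b else 1 / 2 + a / 2) + u (i :: v) := by
      split_ifs <;> linarith [h.1]
    have h2 : (if i = 0 then b else 1 / 2 + a / 2) + u (i :: v) ≤ 1 - a := by
      split_ifs <;> linarith [h.2]
    constructor
    · have := mul_nonneg hp.le h1
      linarith [ih.1]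
    · have := mul_le_mul_of_nonneg_left h2 hp.le
      linarith [ih.2]

lemma left_sep {a b t : ℝ} (ha : 0 < a) (hb : 0 < b) (ht : t = (1 - 3 * a - 2 * b) / 2)
    (ht0 : 0 < t) {u : LarssonWord → ℝ} (hu : ∀ w, u w ∈ Set.Icc 0 t) (w w' : LarssonWord)
    (hl : w.length = w'.length) (hne : w ≠ w') :
    2 * a ^ w.length ≤ |larssonLeft a b u w - larssonLeft a b u w'| := by
  induction w generalizing w' with
  | nil => exact absurd (List.length_eq_zero_iff.1 hl.symm).symm hne
  | cons i v ih =>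
    cases w' with
    | nil => simp at hl
    | cons i' v' =>
      simp only [List.length_cons, add_left_inj] at hl
      have hp : 0 < a ^ v.length := by positivity
      have h := hu (i :: v)
      have h' := hu (i' :: v')
      simp only [larssonLeft, List.length_cons, pow_succ, ← hl]
      by_cases hv : v = v'
      · subst hv
        have hi : i ≠ i' := fun h => hne (by rw [h])
        rw [show ∀ X c d : ℝ, X + a ^ v.length * c - (X + a ^ v.length * d)
          = a ^ v.length * (c - d) from fun _ _ _ => by ring, abs_mul, abs_of_pos hp]
        have : 2 * a ≤ |(if i = 0 then b else 1 / 2 + a / 2) + u (i :: v)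
            - ((if i' = 0 then b else 1 / 2 + a / 2) + u (i' :: v))| := by
          by_cases h0 : i = 0
          · have h1 : i' ≠ 0 := fun h => hi (by rw [h0, h])
            rw [if_pos h0, if_neg h1, le_abs]
            right; linarith [h.1, h.2, h'.1, h'.2]
          · have h1 : i' = 0 := by omega
            rw [if_pos h1, if_neg h0, le_abs]
            left; linarith [h.1, h.2, h'.1, h'.2]
        nlinarith
      · have h1 := ih v' hl hv
        have k1 : 0 ≤ (if i = 0 then b else 1 / 2 + a / 2) + u (i :: v) := by
          split_ifs <;> linarith [h.1]
        have k2 : (if i = 0 then b else 1 / 2 + a / 2) + u (i :: v) ≤ 1 - a := by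
          split_ifs <;> linarith [h.2]
        have k3 : 0 ≤ (if i' = 0 then b else 1 / 2 + a / 2) + u (i' :: v') := by
          split_ifs <;> linarith [h'.1]
        have k4 : (if i' = 0 then b else 1 / 2 + a / 2) + u (i' :: v') ≤ 1 - a := by
          split_ifs <;> linarith [h'.2]
        generalize (if i = 0 then b else 1 / 2 + a / 2) + u (i :: v) = c at *
        generalize (if i' = 0 then b else 1 / 2 + a / 2) + u (i' :: v') = d at *
        have m1 := mul_le_mul_of_nonneg_left k2 hp.le
        have m2 := mul_le_mul_of_nonneg_left k4 hp.le
        have m3 := mul_nonneg hp.le k1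
        have m4 := mul_nonneg hp.le k3
        have m5 : a ^ v.length * a ≤ a ^ v.length := by
          nlinarith
        rw [le_abs] at h1 ⊢
        rcases h1 with h1 | h1
        · left; linarith
        · right; linarith

lemma alive_distinct {a b t K : ℝ} (ha : 0 < a) (hb : 0 < b) (ht : t = (1 - 3 * a - 2 * b) / 2)
    (ht0 : 0 < t) (hK : K < 1) {u : Idx → ℝ} (hu : ∀ w, u w ∈ Set.Icc 0 t) {n : ℕ} {x : ℝ}
    {p q : LarssonWord × LarssonWord} (hp : p ∈ aliveF a b K n x u) (hq : q ∈ aliveF a b K n x u)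
    (hpq : p ≠ q) : p.1 ≠ q.1 ∧ p.2 ≠ q.2 := by
  rw [mem_aliveF] at hp hq
  obtain ⟨⟨hp1, hp2⟩, hp⟩ := hp
  obtain ⟨⟨hq1, hq2⟩, hq⟩ := hq
  have hpow : 0 < a ^ n := by positivity
  have hKa : K * a ^ n < a ^ n := by nlinarith
  rw [abs_le] at hp hq
  unfold LD at hp hq
  constructor
  · intro h
    have hne : p.2 ≠ q.2 := fun h' => hpq (Prod.ext h h')
    have := left_sep ha hb ht ht0 (u := fun w => u (true, w)) (fun w => hu _) p.2 q.2
      (by omega) hne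
    rw [hp2, le_abs] at this
    rw [h] at hp
    rcases this with h | h <;> linarith
  · intro h
    have hne : p.1 ≠ q.1 := fun h' => hpq (Prod.ext h' h)
    have := left_sep ha hb ht ht0 (u := fun w => u (false, w)) (fun w => hu _) p.1 q.1
      (by omega) hne
    rw [hp1, le_abs] at this
    rw [h] at hp
    rcases this with h | h <;> linarith

lemma ZZ_super {a b K : ℝ} (ha : 0 < a) (n m : ℕ) (x : ℝ) (u : Idx → ℝ) :
    ∑ p ∈ aliveF a b K n x u, ZZ a b K m ((LD a b u p + x) / a ^ n) (shiftF p u)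
      ≤ ZZ a b K (m + n) x u := by
  unfold ZZ
  rw [← Finset.card_sigma]
  apply Finset.card_le_card_of_injOn (fun s => (s.2.1 ++ s.1.1, s.2.2 ++ s.1.2))
  · rintro ⟨p, q⟩ hs
    simp only [Finset.coe_sigma, Set.mem_sigma_iff, Finset.mem_coe] at hs
    obtain ⟨hp, hq⟩ := hs
    rw [mem_aliveF] at hp hq
    rw [Finset.mem_coe, mem_aliveF]
    refine ⟨⟨by simp; omega, by simp; omega⟩, ?_⟩
    rw [LD_append a b u hp.1.1 hp.1.2]
    have hpow : 0 < a ^ n := by positivity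
    have h2 := hq.2
    have : LD a b u p + a ^ n * LD a b (shiftF p u) q + x
      = a ^ n * (LD a b (shiftF p u) q + (LD a b u p + x) / a ^ n) := by
      field_simp; ring
    rw [this, abs_mul, abs_of_pos hpow, pow_add]
    nlinarith
  · rintro ⟨p, q⟩ hs ⟨p', q'⟩ hs' h
    simp only [Finset.coe_sigma, Set.mem_sigma_iff, Finset.mem_coe, mem_aliveF] at hs hs'
    simp only [Prod.mk.injEq] at h
    have h1 := List.append_inj h.1 (by omega)
    have h2 := List.append_inj h.2 (by omega)
    have e1 : p = p' := Prod.ext h1.2 h2.2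
    have e2 : q = q' := Prod.ext h1.1 h2.1
    subst e1 e2
    rfl

lemma ZZ_le (a b K : ℝ) (n : ℕ) (x : ℝ) (u : Idx → ℝ) : ZZ a b K n x u ≤ 4 ^ n := by
  unfold ZZ aliveF
  refine (Finset.card_filter_le _ _).trans ?_
  rw [pairsF, Finset.card_product, card_wordsF, ← mul_pow]
  norm_num


open scoped ENNReal

lemma measurable_left (a b : ℝ) (w : LarssonWord) :
    Measurable (fun u : LarssonWord → ℝ => larssonLeft a b u w) := by
  induction w with
  | nil => simp [larssonLeft]
  | cons i v ih =>
    simp only [larssonLeft]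
    fun_prop

lemma measurable_LD (a b : ℝ) (p : LarssonWord × LarssonWord) :
    Measurable (fun u : Idx → ℝ => LD a b u p) := by
  unfold LD
  have h1 : Measurable (fun u : Idx → ℝ => fun w => u (false, w)) := by fun_prop
  have h2 : Measurable (fun u : Idx → ℝ => fun w => u (true, w)) := by fun_prop
  exact ((measurable_left a b p.1).comp h1).sub ((measurable_left a b p.2).comp h2)

lemma measurable_shiftF (p : LarssonWord × LarssonWord) : Measurable (shiftF p) := by
  unfold shiftF
  fun_prop

lemma measurableSet_alive (a b K : ℝ) (n : ℕ) (p : LarssonWord × LarssonWord) :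
    MeasurableSet {z : ℝ × (Idx → ℝ) | p ∈ aliveF a b K n z.1 z.2} := by
  simp only [mem_aliveF]
  by_cases h : p.1.length = n ∧ p.2.length = n
  · simp only [h, and_self, true_and]
    have h2 : Measurable (fun z : ℝ × (Idx → ℝ) => |LD a b z.2 p + z.1|) := by
      have : Measurable (fun z : ℝ × (Idx → ℝ) => LD a b z.2 p) :=
        (measurable_LD a b p).comp measurable_snd
      exact (this.add measurable_fst).abs
    exact measurableSet_le h2 measurable_const
  · simp [h]

lemma measurable_ZZ (a b K : ℝ) (n : ℕ) :
    Measurable (fun z : ℝ × (Idx → ℝ) => (ZZ a b K n z.1 z.2 : ℝ)) := by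
  classical
  have : (fun z : ℝ × (Idx → ℝ) => (ZZ a b K n z.1 z.2 : ℝ)) = fun z =>
      ∑ p ∈ pairsF n, Set.indicator {z : ℝ × (Idx → ℝ) | p ∈ aliveF a b K n z.1 z.2}
        (fun _ => (1 : ℝ)) z := by
    funext z
    simp only [Set.indicator_apply, Set.mem_ofPred_eq, ZZ]
    rw [Finset.sum_boole]
    congr 2
    ext p
    simp only [Finset.mem_filter, mem_pairsF, mem_aliveF]
    tauto
  rw [this]
  exact Finset.measurable_sum _ fun p _ =>
    measurable_const.indicator (measurableSet_alive a b K n p)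

noncomputable def lawF (t : ℝ) : Measure ℝ :=
  (ENNReal.ofReal t)⁻¹ • volume.restrict (Set.Icc 0 t)

structure IsFam (t : ℝ) {Ω : Type*} [MeasurableSpace Ω] (P : Measure Ω)
    (U : Idx → Ω → ℝ) : Prop where
  meas : ∀ p, Measurable (U p)
  law : ∀ p, P.map (U p) = lawF t
  indep : iIndepFun U P

section prob
set_option linter.unusedSectionVars false
variable {Ω : Type*} [MeasurableSpace Ω] {P : Measure Ω} [IsProbabilityMeasure P]
  {t : ℝ} {U : Idx → Ω → ℝ}

lemma IsFam.shift (h : IsFam t P U) (p : LarssonWord × LarssonWord) :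
    IsFam t P (fun c ω => shiftF p (fun d => U d ω) c) := by
  refine ⟨fun c => h.meas _, fun c => h.law _, ?_⟩
  refine h.indep.precomp (g := fun c : Idx => (c.1, c.2 ++ (if c.1 then p.2 else p.1))) ?_
  rintro ⟨c, v⟩ ⟨c', v'⟩ hc
  simp only [Prod.mk.injEq] at hc
  obtain ⟨rfl, h2⟩ := hc
  simpa using h2

lemma IsFam.ae_mem (h : IsFam t P U) : ∀ᵐ ω ∂P, ∀ c, U c ω ∈ Set.Icc 0 t := by
  rw [ae_all_iff]
  intro c
  have h1 : ∀ᵐ y ∂(P.map (U c)), y ∈ Set.Icc 0 t := by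
    rw [h.law c, lawF]
    exact Measure.ae_smul_measure (ae_restrict_mem measurableSet_Icc) _
  exact ae_of_ae_map (h.meas c).aemeasurable h1

lemma measurable_ind (S : Set Idx) : Measurable (fun u : Idx → ℝ => S.indicator u) := by
  classical
  refine measurable_pi_lambda _ fun c => ?_
  by_cases hc : c ∈ S
  · simp only [Set.indicator_of_mem hc]; fun_prop
  · simp only [Set.indicator_of_notMem hc]; fun_prop

lemma IsFam.measU (h : IsFam t P U) : Measurable (fun ω => fun c => U c ω) :=
  measurable_pi_lambda _ fun c => h.meas c

lemma IsFam.indepFun_ind (h : IsFam t P U) {S T : Set Idx} (hST : Disjoint S T) :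
    IndepFun (fun ω => S.indicator (fun c => U c ω)) (fun ω => T.indicator (fun c => U c ω)) P := by
  have key := indep_iSup_of_disjoint (m := fun c => MeasurableSpace.comap (U c) inferInstance)
    (fun c => (h.meas c).comap_le) h.indep hST
  rw [IndepFun_iff_Indep]
  have aux : ∀ S : Set Idx, MeasurableSpace.comap (fun ω => S.indicator (fun c => U c ω))
      inferInstance ≤ ⨆ c ∈ S, MeasurableSpace.comap (U c) inferInstance := by
    intro S
    rw [← measurable_iff_comap_le]
    refine @measurable_pi_lambda _ _ _ (_) _ _ fun c => ?_
    by_cases hc : c ∈ S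
    · simp only [Set.indicator_of_mem hc]
      rw [measurable_iff_comap_le]
      exact le_iSup₂_of_le c hc le_rfl
    · simp only [Set.indicator_of_notMem hc]
      exact @measurable_const _ _ _ (_) _
  exact indep_of_indep_of_le_left (indep_of_indep_of_le_right key (aux T)) (aux S)

/-- Fubini for two independent blocks. -/
lemma IsFam.lintegral_two (h : IsFam t P U) {S T : Set Idx} (hST : Disjoint S T)
    {f : (Idx → ℝ) × (Idx → ℝ) → ℝ≥0∞} (hf : Measurable f) :
    ∫⁻ ω, f (S.indicator (fun c => U c ω), T.indicator (fun c => U c ω)) ∂P =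
      ∫⁻ ω, ∫⁻ ω', f (S.indicator (fun c => U c ω), T.indicator (fun c => U c ω')) ∂P ∂P := by
  have hS : Measurable (fun ω => S.indicator (fun c => U c ω)) :=
    (measurable_ind S).comp h.measU
  have hT : Measurable (fun ω => T.indicator (fun c => U c ω)) :=
    (measurable_ind T).comp h.measU
  have e := (h.indepFun_ind hST).map_prod_eq_prod_map_map hS.aemeasurable hT.aemeasurable
  have := lintegral_map (μ := P) hf (hS.prodMk hT)
  rw [← this, e, lintegral_prod _ hf.aemeasurable, lintegral_map _ hS]
  · refine lintegral_congr fun ω => ?_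
    rw [lintegral_map _ hT]
    exact hf.comp measurable_prodMk_left
  · exact hf.lintegral_prod_right'

lemma IsFam.lintegral_mul (h : IsFam t P U) {S T : Set Idx} (hST : Disjoint S T)
    {f g : (Idx → ℝ) → ℝ≥0∞} (hf : Measurable f) (hg : Measurable g)
    (hfS : ∀ u, f (S.indicator u) = f u) (hgT : ∀ u, g (T.indicator u) = g u) :
    ∫⁻ ω, f (fun c => U c ω) * g (fun c => U c ω) ∂P =
      (∫⁻ ω, f (fun c => U c ω) ∂P) * ∫⁻ ω, g (fun c => U c ω) ∂P := by
  have := h.lintegral_two hST (f := fun z => f z.1 * g z.2)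
    ((hf.comp measurable_fst).mul (hg.comp measurable_snd))
  simp only [hfS, hgT] at this
  rw [this]
  have hf' : Measurable (fun ω => f (fun c => U c ω)) := hf.comp h.measU
  have hg' : Measurable (fun ω => g (fun c => U c ω)) := hg.comp h.measU
  simp_rw [lintegral_const_mul _ hg']
  exact lintegral_mul_const _ hf'

lemma IsFam.lintegral_prod (h : IsFam t P U) {ι : Type*} [DecidableEq ι] (s : Finset ι)
    (T : ι → Set Idx)
    (f : ι → (Idx → ℝ) → ℝ≥0∞) (hf : ∀ i, Measurable (f i))
    (hfT : ∀ i u, f i ((T i).indicator u) = f i u)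
    (hT : ∀ i ∈ s, ∀ j ∈ s, i ≠ j → Disjoint (T i) (T j)) :
    ∫⁻ ω, ∏ i ∈ s, f i (fun c => U c ω) ∂P = ∏ i ∈ s, ∫⁻ ω, f i (fun c => U c ω) ∂P := by
  induction s using Finset.induction_on with
  | empty => simp
  | insert i s his ih =>
    simp only [Finset.prod_insert his]
    rw [← ih (fun i hi j hj => hT i (Finset.mem_insert_of_mem hi) j (Finset.mem_insert_of_mem hj))]
    refine h.lintegral_mul (S := T i) (T := ⋃ j ∈ s, T j) (g := fun u => ∏ j ∈ s, f j u) ?_ (hf i)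
      (Finset.measurable_prod _ fun j _ => hf j) (hfT i) ?_
    · rw [Set.disjoint_iUnion₂_right]
      intro j hj
      exact hT i (Finset.mem_insert_self _ _) j (Finset.mem_insert_of_mem hj)
        (fun e => his (e ▸ hj))
    · intro u
      refine Finset.prod_congr rfl fun j hj => ?_
      rw [← hfT j, Set.indicator_indicator, Set.inter_eq_left.2, hfT]
      exact Set.subset_biUnion_of_mem (u := T) hj

/-- Laplace transform -/
noncomputable def expZ (a b K s : ℝ) (n : ℕ) (x : ℝ) (u : Idx → ℝ) : ℝ≥0∞ :=
  ENNReal.ofReal (Real.exp (-(s * ZZ a b K n x u)))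

lemma measurable_expZ (a b K s : ℝ) (n : ℕ) :
    Measurable (fun z : ℝ × (Idx → ℝ) => expZ a b K s n z.1 z.2) := by
  have := measurable_ZZ a b K n
  unfold expZ
  fun_prop

lemma measurable_expZ' (a b K s : ℝ) (n : ℕ) {α : Type*} [MeasurableSpace α] {f : α → ℝ}
    {g : α → Idx → ℝ} (hf : Measurable f) (hg : Measurable g) :
    Measurable (fun z => expZ a b K s n (f z) (g z)) := by
  have h1 : Measurable (fun z => (f z, g z)) := hf.prodMk hg
  have h2 := (measurable_expZ a b K s n).comp h1
  simp only [Function.comp_def] at h2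
  exact h2

lemma expZ_congr (a b K s : ℝ) (n : ℕ) (x : ℝ) {u u' : Idx → ℝ}
    (h : ∀ c v, v ≠ [] → v.length ≤ n → u (c, v) = u' (c, v)) :
    expZ a b K s n x u = expZ a b K s n x u' := by
  unfold expZ ZZ
  rw [aliveF_congr a b K n x h]

open Classical in
lemma step {a b K s s' : ℝ} (ha : 0 < a) (hb : 0 < b) (ht : t = (1 - 3 * a - 2 * b) / 2)
    (ht0 : 0 < t) (hK : K < 1) (hs : 0 ≤ s) (m : ℕ)
    (H : ∀ V : Idx → Ω → ℝ, IsFam t P V → ∀ y ∈ Set.Icc (-K) K,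
      ∫⁻ ω, expZ a b K s m y (fun c => V c ω) ∂P ≤ ENNReal.ofReal (Real.exp (-s')))
    (h : IsFam t P U) (n : ℕ) (x : ℝ) :
    ∫⁻ ω, expZ a b K s (m + n) x (fun c => U c ω) ∂P ≤
      ∫⁻ ω, expZ a b K s' n x (fun c => U c ω) ∂P := by
  let S : Set Idx := {c | c.2.length ≤ n}
  let T : Set Idx := {c | n < c.2.length}
  have hST : Disjoint S T := by
    rw [Set.disjoint_left]; intro c h1 h2
    simp only [S, T, Set.mem_ofPred_eq] at h1 h2; omega
  let F : (Idx → ℝ) × (Idx → ℝ) → ℝ≥0∞ := fun z =>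
    ∏ p ∈ pairsF n, if p ∈ aliveF a b K n x z.1 then
      expZ a b K s m ((LD a b z.1 p + x) / a ^ n) (shiftF p z.2) else 1
  have hF : Measurable F := by
    refine Finset.measurable_prod _ fun p _ => ?_
    have hms : MeasurableSet {z : (Idx → ℝ) × (Idx → ℝ) | p ∈ aliveF a b K n x z.1} := by
      have : Measurable (fun z : (Idx → ℝ) × (Idx → ℝ) => (x, z.1)) := by fun_prop
      exact this (measurableSet_alive a b K n p)
    refine Measurable.ite hms ?_ measurable_const
    · have h1 : Measurable (fun z : (Idx → ℝ) × (Idx → ℝ) => (LD a b z.1 p + x) / a ^ n) :=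
        (((measurable_LD a b p).comp measurable_fst).add_const x).div_const _
      have h2 : Measurable (fun z : (Idx → ℝ) × (Idx → ℝ) => shiftF p z.2) :=
        (measurable_shiftF p).comp measurable_snd
      exact measurable_expZ' a b K s m h1 h2
  have hFalive : ∀ z, F z = ∏ p ∈ aliveF a b K n x z.1,
      expZ a b K s m ((LD a b z.1 p + x) / a ^ n) (shiftF p z.2) := by
    intro z
    simp only [F]
    rw [← Finset.prod_filter]
    refine Finset.prod_congr ?_ fun _ _ => rfl
    ext p
    simp only [Finset.mem_filter, mem_pairsF, mem_aliveF]
    tauto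
  have hshift : ∀ (u : Idx → ℝ) p, p ∈ pairsF n → ∀ c v, v ≠ [] → v.length ≤ m →
      shiftF p (T.indicator u) (c, v) = shiftF p u (c, v) := by
    intro u p hp c v hv _
    rw [mem_pairsF] at hp
    have : 0 < v.length := List.length_pos_iff.2 hv
    simp only [shiftF]
    rw [Set.indicator_of_mem]
    simp only [T, Set.mem_ofPred_eq, List.length_append]
    split_ifs <;> omega
  have hSalive : ∀ u : Idx → ℝ, aliveF a b K n x (S.indicator u) = aliveF a b K n x u := by
    intro u
    refine aliveF_congr a b K n x fun c v _ hl => ?_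
    rw [Set.indicator_of_mem]
    exact hl
  have hSLD : ∀ u : Idx → ℝ, ∀ p ∈ pairsF n, LD a b (S.indicator u) p = LD a b u p := by
    intro u p hp
    rw [mem_pairsF] at hp
    refine LD_congr a b p fun c v _ hl => ?_
    rw [Set.indicator_of_mem]
    simp only [S, Set.mem_ofPred_eq]; omega
  have hsub : ∀ u : Idx → ℝ, aliveF a b K n x u ⊆ pairsF n := fun u => Finset.filter_subset _ _
  calc ∫⁻ ω, expZ a b K s (m + n) x (fun c => U c ω) ∂P
      ≤ ∫⁻ ω, F (S.indicator (fun c => U c ω), T.indicator (fun c => U c ω)) ∂P := by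
        refine lintegral_mono fun ω => ?_
        set u : Idx → ℝ := fun c => U c ω
        rw [hFalive, hSalive]
        have e : ∏ p ∈ aliveF a b K n x u, expZ a b K s m
            ((LD a b (S.indicator u) p + x) / a ^ n) (shiftF p (T.indicator u)) =
            ∏ p ∈ aliveF a b K n x u, expZ a b K s m
            ((LD a b u p + x) / a ^ n) (shiftF p u) := by
          refine Finset.prod_congr rfl fun p hp => ?_
          rw [hSLD u p (hsub u hp)]
          exact expZ_congr a b K s m _ (hshift u p (hsub u hp))
        rw [e]
        unfold expZ
        rw [← ENNReal.ofReal_prod_of_nonneg (fun _ _ => (Real.exp_pos _).le), ← Real.exp_sum]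
        apply ENNReal.ofReal_le_ofReal
        apply Real.exp_le_exp.2
        rw [Finset.sum_neg_distrib, neg_le_neg_iff, ← Finset.mul_sum]
        apply mul_le_mul_of_nonneg_left _ hs
        exact_mod_cast ZZ_super ha n m x u
    _ = ∫⁻ ω, ∫⁻ ω', F (S.indicator (fun c => U c ω), T.indicator (fun c => U c ω')) ∂P ∂P :=
        h.lintegral_two hST hF
    _ ≤ ∫⁻ ω, expZ a b K s' n x (fun c => U c ω) ∂P := by
        refine lintegral_mono_ae ?_
        filter_upwards [h.ae_mem] with ω hω
        set u : Idx → ℝ := fun c => U c ω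
        simp only [hFalive, hSalive]
        have hind := h.lintegral_prod (aliveF a b K n x u)
          (fun p => {c | c.2 ≠ [] ∧ ∃ v, v ≠ [] ∧ c.2 = v ++ (if c.1 then p.2 else p.1)})
          (fun p u' => expZ a b K s m ((LD a b (S.indicator u) p + x) / a ^ n)
            (shiftF p u')) (fun p => ?_) (fun p u' => ?_) ?_
        · have e2 : ∀ ω', ∏ p ∈ aliveF a b K n x u, expZ a b K s m
              ((LD a b (S.indicator u) p + x) / a ^ n) (shiftF p (T.indicator fun c => U c ω')) =
              ∏ p ∈ aliveF a b K n x u, expZ a b K s m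
              ((LD a b (S.indicator u) p + x) / a ^ n) (shiftF p (fun c => U c ω')) := by
            intro ω'
            refine Finset.prod_congr rfl fun p hp => ?_
            exact expZ_congr a b K s m _ (hshift _ p (hsub u hp))
          simp_rw [e2]
          rw [hind]
          have : expZ a b K s' n x u = ∏ p ∈ aliveF a b K n x u,
              ENNReal.ofReal (Real.exp (-s')) := by
            rw [Finset.prod_const, expZ, ← ENNReal.ofReal_pow (Real.exp_pos _).le,
              ← Real.exp_nat_mul, ZZ]
            congr 2; ring
          rw [this]
          refine Finset.prod_le_prod' fun p hp => ?_
          refine H _ (h.shift p) _ ?_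
          rw [hSLD u p (hsub u hp)]
          have hpow : 0 < a ^ n := by positivity
          rw [mem_aliveF] at hp
          rw [Set.mem_Icc, ← abs_le, abs_div, abs_of_pos hpow, div_le_iff₀ hpow]
          exact hp.2
        · exact measurable_expZ' a b K s m measurable_const (measurable_shiftF p)
        · refine expZ_congr a b K s m _ fun c v hv _ => ?_
          simp only [shiftF]
          rw [Set.indicator_of_mem]
          exact ⟨by simp [hv], v, hv, rfl⟩
        · intro p hp q hq hpq
          have hd := alive_distinct ha hb ht ht0 hK hω hp hq hpq
          rw [mem_aliveF] at hp hq
          rw [Set.disjoint_left]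
          rintro ⟨c, w⟩ ⟨_, v, _, h1⟩ ⟨_, v', _, h2⟩
          simp only at h1 h2
          cases c
          · simp only [Bool.false_eq_true, if_false] at h1 h2
            exact hd.1 (List.append_inj' (h1.symm.trans h2) (by omega)).2
          · simp only [if_true] at h1 h2
            exact hd.2 (List.append_inj' (h1.symm.trans h2) (by omega)).2


lemma lawF_Icc (ht0 : 0 < t) {α β : ℝ} (hα : 0 ≤ α) (hβ : β ≤ t) :
    lawF t (Set.Icc α β) = ENNReal.ofReal ((β - α) / t) := by
  rw [lawF, Measure.smul_apply, Measure.restrict_apply measurableSet_Icc,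
    Set.inter_eq_left.2 (Set.Icc_subset_Icc hα hβ), Real.volume_Icc, smul_eq_mul,
    ENNReal.ofReal_div_of_pos ht0, mul_comm, div_eq_mul_inv]

abbrev zw (k : ℕ) : LarssonWord := List.replicate k 0

abbrev c0 : Idx := (false, [0])

lemma left_last (a b : ℝ) {u u' : LarssonWord → ℝ} (h : ∀ w, w ≠ [0] → u w = u' w)
    (h0 : u' [0] = 0) (v : LarssonWord) :
    larssonLeft a b u (v ++ [0]) = larssonLeft a b u' (v ++ [0]) + u [0] := by
  induction v with
  | nil => simp [larssonLeft, h0]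
  | cons i v ih =>
    simp only [List.cons_append, larssonLeft, ih]
    rw [h (i :: (v ++ [0])) (by simp)]
    ring

lemma LD_split (a b : ℝ) (u : Idx → ℝ) (k : ℕ) (v w : LarssonWord) :
    LD a b u (v ++ zw (k + 1), w) = LD a b (({c0}ᶜ : Set Idx).indicator u) (v ++ zw (k + 1), w)
      + u c0 := by
  unfold LD
  simp only [zw, List.replicate_succ', ← List.append_assoc]
  rw [left_last a b (u' := fun w => ({c0}ᶜ : Set Idx).indicator u (false, w)) ?_ ?_ (v ++ List.replicate k 0)]
  · have : (fun w => u (true, w)) = fun w => ({c0}ᶜ : Set Idx).indicator u (true, w) := by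
      funext w
      rw [Set.indicator_of_mem]
      simp [c0]
    rw [this]
    ring
  · intro w hw
    rw [Set.indicator_of_mem]
    simp [c0, hw]
  · rw [Set.indicator_of_notMem]
    simp [c0]

lemma LD_near {a b : ℝ} (ha : 0 < a) (ha2 : 2 * a ≤ 1) (ht0 : 0 < t) {r : Idx → ℝ} (k : ℕ)
    (h : ∀ c j, 1 ≤ j → j ≤ k → r (c, zw (j + 1)) ∈ Set.Icc 0 (t / 16)) :
    |LD a b r (zw (k + 1), zw (k + 1)) - (r (false, [0]) - r (true, [0]))|
      ≤ t / 16 * (1 - a ^ k) := by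
  induction k with
  | zero => simp [LD, zw, larssonLeft]
  | succ k ih =>
    have ih := ih (fun c j h1 h2 => h c j h1 (by omega))
    have e : LD a b r (zw (k + 1 + 1), zw (k + 1 + 1)) = LD a b r (zw (k + 1), zw (k + 1))
        + a ^ (k + 1) * (r (false, zw (k + 1 + 1)) - r (true, zw (k + 1 + 1))) := by
      simp only [LD, zw]
      rw [List.replicate_succ (n := k + 1)]
      simp only [larssonLeft, List.length_replicate]
      ring
    have h1 := h false (k + 1) (by omega) le_rfl
    have h2 := h true (k + 1) (by omega) le_rfl
    rw [e]
    have hp : 0 < a ^ (k + 1) := by positivity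
    have hpk : 0 < a ^ k := by positivity
    have hd : |a ^ (k + 1) * (r (false, zw (k + 1 + 1)) - r (true, zw (k + 1 + 1)))|
        ≤ a ^ (k + 1) * (t / 16) := by
      rw [abs_mul, abs_of_pos hp]
      refine mul_le_mul_of_nonneg_left ?_ hp.le
      rw [abs_le]
      constructor <;> linarith [h1.1, h1.2, h2.1, h2.2]
    have hq : 2 * a ^ (k + 1) ≤ a ^ k := by rw [pow_succ]; nlinarith
    calc _ = |(LD a b r (zw (k + 1), zw (k + 1)) - (r (false, [0]) - r (true, [0])))
          + a ^ (k + 1) * (r (false, zw (k + 1 + 1)) - r (true, zw (k + 1 + 1)))| := by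
          congr 1; ring
      _ ≤ _ := abs_add_le _ _
      _ ≤ t / 16 * (1 - a ^ k) + a ^ (k + 1) * (t / 16) := add_le_add ih hd
      _ ≤ _ := by nlinarith

noncomputable def setsF (t : ℝ) (c : Idx) : Set ℝ :=
  if c = (true, [0]) then Set.Icc (t / 4) (3 * t / 4) else Set.Icc 0 (t / 16)

noncomputable def idxF (k : ℕ) : Finset Idx :=
  ((Finset.univ : Finset Bool) ×ˢ ((Finset.range (k + 1)).image (fun j => zw (j + 1)))).erase c0

lemma setsF_meas (t : ℝ) (c : Idx) : MeasurableSet (setsF t c) := by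
  unfold setsF; split_ifs <;> exact measurableSet_Icc

lemma setsF_law (ht0 : 0 < t) (c : Idx) : ENNReal.ofReal (1 / 16) ≤ lawF t (setsF t c) := by
  unfold setsF
  split_ifs
  · rw [lawF_Icc ht0 (by linarith) (by linarith)]
    apply ENNReal.ofReal_le_ofReal
    rw [le_div_iff₀ ht0]; linarith
  · rw [lawF_Icc ht0 le_rfl (by linarith)]
    apply ENNReal.ofReal_le_ofReal
    rw [le_div_iff₀ ht0]; linarith

lemma IsFam.prob_E (h : IsFam t P U) (ht0 : 0 < t) (k : ℕ) :
    ENNReal.ofReal ((1 / 16) ^ (idxF k).card) ≤ P (⋂ c ∈ idxF k, U c ⁻¹' setsF t c) := by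
  rw [h.indep.measure_inter_preimage_eq_mul _ (fun c _ => setsF_meas t c),
    ENNReal.ofReal_pow (by norm_num), ← Finset.prod_const]
  refine Finset.prod_le_prod' fun c _ => ?_
  rw [← Measure.map_apply (h.meas c) (setsF_meas t c), h.law c]
  exact setsF_law ht0 c

lemma near_all {a b : ℝ} (ha : 0 < a) (hb : 0 < b) (ha2 : 2 * a ≤ 1)
    (ht : t = (1 - 3 * a - 2 * b) / 2) (ht0 : 0 < t) {u : Idx → ℝ}
    (hu : ∀ c, u c ∈ Set.Icc 0 t) (k : ℕ) (hk : a ^ (k + 1) ≤ t / 16)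
    (hE : ∀ c ∈ idxF k, u c ∈ setsF t c) (v w : LarssonWord) :
    LD a b (({c0}ᶜ : Set Idx).indicator u) (v ++ zw (k + 1), w ++ zw (k + 1)) ∈
      Set.Icc (-(7 * t / 8)) (-(t / 8)) := by
  set r : Idx → ℝ := ({c0}ᶜ : Set Idx).indicator u with hr
  have hrt : ∀ c, r c ∈ Set.Icc 0 t := by
    intro c
    by_cases hc : c ∈ ({c0}ᶜ : Set Idx)
    · rw [hr, Set.indicator_of_mem hc]; exact hu c
    · rw [hr, Set.indicator_of_notMem hc]; exact ⟨le_rfl, ht0.le⟩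
  have hmem : ∀ c j, j ≤ k → (c, zw (j + 1)) ≠ c0 → r (c, zw (j + 1)) ∈ setsF t (c, zw (j + 1)) := by
    intro c j hj hc
    rw [hr, Set.indicator_of_mem (by simpa using hc)]
    apply hE
    unfold idxF
    rw [Finset.mem_erase]
    refine ⟨hc, ?_⟩
    simp only [Finset.mem_product, Finset.mem_univ, true_and, Finset.mem_image, Finset.mem_range]
    exact ⟨j, by omega, rfl⟩
  have hne : ∀ j, 1 ≤ j → zw (j + 1) ≠ [0] := by
    intro j hj e
    have := congrArg List.length e
    simp [zw] at this; omega
  have h1 := LD_near (b := b) ha ha2 ht0 (r := r) k (fun c j h1 h2 => by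
    have := hmem c j h2 (by simp only [c0, ne_eq, Prod.mk.injEq, not_and]; exact fun _ => hne j h1)
    unfold setsF at this
    rwa [if_neg] at this
    simp only [Prod.mk.injEq, not_and]; exact fun _ => hne j h1)
  have h2 : r (false, [0]) = 0 := by rw [hr, Set.indicator_of_notMem]; simp [c0]
  have h3 : r (true, [0]) ∈ Set.Icc (t / 4) (3 * t / 4) := by
    have := hmem true 0 (by omega) (by simp [c0])
    simpa [setsF, zw] using this
  have e := LD_append a b r (n := k + 1) (p := (zw (k + 1), zw (k + 1))) (by simp [zw])
    (by simp [zw]) (v, w)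
  simp only at e
  rw [e]
  have hL : |LD a b (shiftF (zw (k + 1), zw (k + 1)) r) (v, w)| ≤ 1 := by
    unfold LD
    have l1 := left_mem ha hb ht ht0
      (u := fun w => shiftF (zw (k + 1), zw (k + 1)) r (false, w)) (fun w => hrt _) v
    have l2 := left_mem ha hb ht ht0
      (u := fun w => shiftF (zw (k + 1), zw (k + 1)) r (true, w)) (fun w => hrt _) w
    have p1 : 0 < a ^ v.length := by positivity
    have p2 : 0 < a ^ w.length := by positivity
    rw [abs_le]
    constructor <;> simp only <;> linarith
  have hp : 0 < a ^ (k + 1) := by positivity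
  have hpk : 0 < a ^ k := by positivity
  rw [h2, abs_le] at h1
  rw [abs_le] at hL
  have m1 := mul_le_mul_of_nonneg_left hL.1 hp.le
  have m2 := mul_le_mul_of_nonneg_left hL.2 hp.le
  have m3 : t / 16 * (1 - a ^ k) ≤ t / 16 := by nlinarith
  constructor <;> linarith [h3.1, h3.2]

lemma pair_prob {a b : ℝ} (ha : 0 < a) (hb : 0 < b) (ha2 : 2 * a ≤ 1)
    (ht : t = (1 - 3 * a - 2 * b) / 2) (ht0 : 0 < t) (h : IsFam t P U)
    (k : ℕ) (hk : a ^ (k + 1) ≤ t / 16) (v w : LarssonWord) {y η : ℝ}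
    (hy : y ∈ Set.Icc (-(t / 16)) (t / 16)) (hη : η ≤ t / 16) (hη0 : 0 ≤ η) :
    ENNReal.ofReal ((1 / 16) ^ (idxF k).card * (2 * η / t)) ≤
      P {ω | |LD a b (fun c => U c ω) (v ++ zw (k + 1), w ++ zw (k + 1)) + y| ≤ η} := by
  set p : LarssonWord × LarssonWord := (v ++ zw (k + 1), w ++ zw (k + 1)) with hp
  let M : Set ((Idx → ℝ) × (Idx → ℝ)) := {z | |LD a b z.1 p + z.2 c0 + y| ≤ η}
  have hM : MeasurableSet M := by
    have h1 : Measurable (fun z : (Idx → ℝ) × (Idx → ℝ) => LD a b z.1 p) :=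
      (measurable_LD a b p).comp measurable_fst
    have h2 : Measurable (fun z : (Idx → ℝ) × (Idx → ℝ) => z.2 c0) := by fun_prop
    exact measurableSet_le ((h1.add h2).add_const y).abs measurable_const
  have hdis : Disjoint ({c0}ᶜ : Set Idx) {c0} := disjoint_compl_left
  have two := h.lintegral_two hdis (f := M.indicator (fun _ => (1 : ℝ≥0∞)))
    (measurable_const.indicator hM)
  have hmeas : MeasurableSet {ω | |LD a b (fun c => U c ω) p + y| ≤ η} := by
    have h1 : Measurable (fun ω => LD a b (fun c => U c ω) p) :=
      (measurable_LD a b p).comp h.measU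
    exact measurableSet_le (h1.add_const y).abs measurable_const
  have e1 : ∫⁻ ω, M.indicator (fun _ => (1 : ℝ≥0∞))
      (({c0}ᶜ : Set Idx).indicator (fun c => U c ω), ({c0} : Set Idx).indicator (fun c => U c ω)) ∂P
      = P {ω | |LD a b (fun c => U c ω) p + y| ≤ η} := by
    rw [← lintegral_indicator_one hmeas]
    refine lintegral_congr fun ω => ?_
    have : (({c0}ᶜ : Set Idx).indicator (fun c => U c ω),
        ({c0} : Set Idx).indicator (fun c => U c ω)) ∈ M ↔
        ω ∈ {ω | |LD a b (fun c => U c ω) p + y| ≤ η} := by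
      simp only [M, Set.mem_ofPred_eq]
      rw [hp, LD_split a b (fun c => U c ω) k v (w ++ zw (k + 1)),
        Set.indicator_of_mem (Set.mem_singleton c0)]
    by_cases hω : ω ∈ {ω | |LD a b (fun c => U c ω) p + y| ≤ η}
    · rw [Set.indicator_of_mem (this.2 hω), Set.indicator_of_mem hω]; rfl
    · rw [Set.indicator_of_notMem (fun h' => hω (this.1 h')), Set.indicator_of_notMem hω]
  rw [← e1, two]
  set E : Set Ω := ⋂ c ∈ idxF k, U c ⁻¹' setsF t c with hE
  have hEm : MeasurableSet E :=
    Finset.measurableSet_biInter _ fun c _ => h.meas c (setsF_meas t c)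
  calc ENNReal.ofReal ((1 / 16) ^ (idxF k).card * (2 * η / t))
      = ENNReal.ofReal ((1 / 16) ^ (idxF k).card) * ENNReal.ofReal (2 * η / t) :=
        ENNReal.ofReal_mul (by positivity)
    _ ≤ P E * ENNReal.ofReal (2 * η / t) := by gcongr; exact h.prob_E ht0 k
    _ = ∫⁻ ω, E.indicator (fun _ => ENNReal.ofReal (2 * η / t)) ω ∂P := by
        rw [lintegral_indicator_const hEm, mul_comm]
    _ ≤ _ := by
        refine lintegral_mono_ae ?_
        filter_upwards [h.ae_mem] with ω hω
        by_cases hωE : ω ∈ E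
        · rw [Set.indicator_of_mem hωE]
          have hn := near_all ha hb ha2 ht ht0 hω k hk (by
            intro c hc
            have := Set.mem_iInter₂.1 hωE c hc
            exact this) v w
          rw [← hp] at hn
          set W := LD a b (({c0}ᶜ : Set Idx).indicator (fun c => U c ω)) p
          have e2 : ∀ ω', M.indicator (fun _ => (1 : ℝ≥0∞))
              (({c0}ᶜ : Set Idx).indicator (fun c => U c ω),
                ({c0} : Set Idx).indicator (fun c => U c ω')) =
              (U c0 ⁻¹' Set.Icc (-(W + y) - η) (-(W + y) + η)).indicator 1 ω' := by
            intro ω'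
            have : (({c0}ᶜ : Set Idx).indicator (fun c => U c ω),
                ({c0} : Set Idx).indicator (fun c => U c ω')) ∈ M ↔
                ω' ∈ U c0 ⁻¹' Set.Icc (-(W + y) - η) (-(W + y) + η) := by
              simp only [M, Set.mem_ofPred_eq, Set.mem_preimage, Set.mem_Icc]
              rw [Set.indicator_of_mem (Set.mem_singleton c0), abs_le]
              constructor <;> rintro ⟨h1, h2⟩ <;> constructor <;> linarith
            by_cases hω' : ω' ∈ U c0 ⁻¹' Set.Icc (-(W + y) - η) (-(W + y) + η)
            · rw [Set.indicator_of_mem (this.2 hω'), Set.indicator_of_mem hω']; rfl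
            · rw [Set.indicator_of_notMem (fun h' => hω' (this.1 h')),
                Set.indicator_of_notMem hω']
          simp_rw [e2]
          rw [lintegral_indicator_one (h.meas c0 measurableSet_Icc),
            ← Measure.map_apply (h.meas c0) measurableSet_Icc, h.law,
            lawF_Icc ht0 (by linarith [hn.2, hy.2]) (by linarith [hn.1, hy.1])]
          apply le_of_eq
          congr 2
          ring
        · rw [Set.indicator_of_notMem hωE]
          exact zero_le

lemma ZZ_enn (a b K : ℝ) (n : ℕ) (x : ℝ) (u : Idx → ℝ) :
    (ZZ a b K n x u : ℝ≥0∞) = ∑ p ∈ pairsF n,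
      ({u : Idx → ℝ | |LD a b u p + x| ≤ K * a ^ n}).indicator (fun _ => 1) u := by
  classical
  simp only [Set.indicator_apply, Set.mem_ofPred_eq, ZZ]
  rw [Finset.sum_boole]
  congr 2

lemma mean_lower {a b : ℝ} (ha : 0 < a) (hb : 0 < b) (ha2 : 2 * a ≤ 1)
    (ht : t = (1 - 3 * a - 2 * b) / 2) (ht0 : 0 < t) (h : IsFam t P U)
    (k : ℕ) (hk : a ^ (k + 1) ≤ t / 16) {y : ℝ}
    (hy : y ∈ Set.Icc (-(t / 16)) (t / 16)) (m : ℕ) (hm : k + 1 ≤ m) :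
    ENNReal.ofReal ((1 / 16) ^ (idxF k).card * (1 / 4) ^ (k + 1) * (1 / 8) * (4 * a) ^ m) ≤
      ∫⁻ ω, (ZZ a b (t / 16) m y (fun c => U c ω) : ℝ≥0∞) ∂P := by
  classical
  have hmeas : ∀ p, MeasurableSet {ω | |LD a b (fun c => U c ω) p + y| ≤ t / 16 * a ^ m} := by
    intro p
    have h1 : Measurable (fun ω => LD a b (fun c => U c ω) p) :=
      (measurable_LD a b p).comp h.measU
    exact measurableSet_le (h1.add_const y).abs measurable_const
  have e : ∫⁻ ω, (ZZ a b (t / 16) m y (fun c => U c ω) : ℝ≥0∞) ∂P =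
      ∑ p ∈ pairsF m, P {ω | |LD a b (fun c => U c ω) p + y| ≤ t / 16 * a ^ m} := by
    have : ∀ ω, (ZZ a b (t / 16) m y (fun c => U c ω) : ℝ≥0∞) = ∑ p ∈ pairsF m,
      ({ω | |LD a b (fun c => U c ω) p + y| ≤ t / 16 * a ^ m}).indicator 1 ω := by
      intro ω
      rw [ZZ_enn]
      rfl
    simp_rw [this]
    rw [lintegral_finsetSum _ (fun p _ => measurable_one.indicator (hmeas p))]
    exact Finset.sum_congr rfl fun p _ => lintegral_indicator_one (hmeas p)
  rw [e]
  let g : LarssonWord × LarssonWord → LarssonWord × LarssonWord :=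
    fun q => (q.1 ++ zw (k + 1), q.2 ++ zw (k + 1))
  have hg : Function.Injective g := by
    rintro ⟨v, w⟩ ⟨v', w'⟩ hh
    simpa [g] using hh
  have hsub : (pairsF (m - (k + 1))).image g ⊆ pairsF m := by
    intro p hp
    rw [Finset.mem_image] at hp
    obtain ⟨q, hq, rfl⟩ := hp
    rw [mem_pairsF] at hq ⊢
    simp only [g, List.length_append, zw, List.length_replicate]
    omega
  refine le_trans ?_ (Finset.sum_le_sum_of_subset hsub)
  rw [Finset.sum_image (fun x _ y _ hxy => hg hxy)]
  have ha1 : a ^ m ≤ 1 := pow_le_one₀ ha.le (by linarith)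
  have hpm : 0 < a ^ m := by positivity
  have hb := fun q : LarssonWord × LarssonWord =>
    pair_prob ha hb ha2 ht ht0 h k hk q.1 q.2 hy (η := t / 16 * a ^ m) (by nlinarith)
      (by positivity)
  refine le_trans ?_ (Finset.sum_le_sum fun q _ => hb q)
  rw [Finset.sum_const, pairsF, Finset.card_product, card_wordsF, nsmul_eq_mul,
    ← ENNReal.ofReal_natCast, ← ENNReal.ofReal_mul (by positivity)]
  apply ENNReal.ofReal_le_ofReal
  apply le_of_eq
  obtain ⟨d, rfl⟩ := Nat.exists_eq_add_of_le hm
  rw [Nat.add_sub_cancel_left, ← mul_pow]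
  push_cast
  have h4 : (1 / 4 : ℝ) ^ (k + 1) * 4 ^ (k + 1) = 1 := by rw [← mul_pow]; norm_num
  rw [mul_pow 4 a, pow_add 4]
  have : (2 * (t / 16 * a ^ (k + 1 + d)) / t) = 1 / 8 * a ^ (k + 1 + d) := by
    field_simp; ring
  rw [this]
  linear_combination ((1 / 16) ^ (idxF k).card * (1 / 8) * 4 ^ d * a ^ (k + 1 + d)) * h4

lemma exp_le_aux {y : ℝ} (h0 : 0 ≤ y) (h1 : y ≤ 1) : Real.exp (-y) ≤ 1 - y / 2 := by
  rw [Real.exp_neg, inv_le_comm₀ (Real.exp_pos _) (by linarith)]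
  refine le_trans ?_ (Real.add_one_le_exp y)
  rw [inv_le_comm₀ (by linarith) (by linarith), inv_le_iff_one_le_mul₀ (by linarith)]
  nlinarith

lemma laplace {a b K s : ℝ} (h : IsFam t P U) (m : ℕ) (y : ℝ)
    (hmean : 4 ≤ ∫⁻ ω, (ZZ a b K m y (fun c => U c ω) : ℝ≥0∞) ∂P) (hs : 0 ≤ s)
    (hs1 : s * 4 ^ m ≤ 1) :
    ∫⁻ ω, expZ a b K s m y (fun c => U c ω) ∂P ≤ ENNReal.ofReal (1 - 2 * s) := by
  have hpt : ∀ u : Idx → ℝ, expZ a b K s m y u + ENNReal.ofReal (s / 2) * (ZZ a b K m y u : ℝ≥0∞)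
      ≤ 1 := by
    intro u
    have hZ : (ZZ a b K m y u : ℝ) ≤ 4 ^ m := by exact_mod_cast ZZ_le a b K m y u
    have hZ0 : (0 : ℝ) ≤ ZZ a b K m y u := Nat.cast_nonneg _
    rw [← ENNReal.ofReal_natCast, ← ENNReal.ofReal_mul (by positivity), expZ,
      ← ENNReal.ofReal_add (Real.exp_pos _).le (by positivity), ← ENNReal.ofReal_one]
    apply ENNReal.ofReal_le_ofReal
    have := exp_le_aux (y := s * ZZ a b K m y u) (by positivity) (by nlinarith)
    linarith
  have hme : Measurable (fun ω => expZ a b K s m y (fun c => U c ω)) :=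
    measurable_expZ' a b K s m measurable_const h.measU
  have hint : ∫⁻ ω, expZ a b K s m y (fun c => U c ω) ∂P + ENNReal.ofReal (2 * s) ≤ 1 := by
    calc _ ≤ ∫⁻ ω, expZ a b K s m y (fun c => U c ω) ∂P
        + ENNReal.ofReal (s / 2) * ∫⁻ ω, (ZZ a b K m y (fun c => U c ω) : ℝ≥0∞) ∂P := by
          gcongr
          calc ENNReal.ofReal (2 * s) = ENNReal.ofReal (s / 2) * 4 := by
                rw [show (4 : ℝ≥0∞) = ENNReal.ofReal 4 by simp, ← ENNReal.ofReal_mul (by positivity)]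
                congr 1; ring
            _ ≤ _ := by gcongr
      _ ≤ ∫⁻ ω, (expZ a b K s m y (fun c => U c ω)
        + ENNReal.ofReal (s / 2) * (ZZ a b K m y (fun c => U c ω) : ℝ≥0∞)) ∂P := by
          rw [lintegral_add_left hme]
          gcongr
          rw [lintegral_const_mul' _ _ ENNReal.ofReal_ne_top]
      _ ≤ ∫⁻ ω, 1 ∂P := lintegral_mono fun ω => hpt _
      _ = 1 := by simp
  rw [ENNReal.ofReal_sub _ (by positivity), ENNReal.ofReal_one]
  exact ENNReal.le_sub_of_add_le_right ENNReal.ofReal_ne_top hint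


lemma final {a b : ℝ} (ha : 1 / 4 < a) (hb : 0 < b)
    (ht : t = (1 - 3 * a - 2 * b) / 2) (ht0 : 0 < t) (h : IsFam t P U) :
    ∃ m0 : ℕ, 1 ≤ m0 ∧ ∃ s > (0 : ℝ), s ≤ 1 / 2 ∧ ∀ j l : ℕ, m0 ≤ l → l < 2 * m0 →
      ∀ x ∈ Set.Icc (-(t / 16)) (t / 16),
      ∫⁻ ω, expZ a b (t / 16) (s / 2 ^ j) (j * m0 + l) x (fun c => U c ω) ∂P
        ≤ ENNReal.ofReal (1 - 2 * s) := by
  have ha0 : 0 < a := by linarith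
  have ha2 : 2 * a ≤ 1 := by linarith
  obtain ⟨k, hk⟩ := exists_pow_lt_of_lt_one (show (0 : ℝ) < t / 16 by linarith)
    (show a < 1 by linarith)
  have hk' : a ^ (k + 1) ≤ t / 16 := by
    have : 0 < a ^ k := by positivity
    rw [pow_succ]; nlinarith
  set c : ℝ := (1 / 16) ^ (idxF k).card * (1 / 4) ^ (k + 1) * (1 / 8) with hc
  have hc0 : 0 < c := by positivity
  obtain ⟨m1, hm1⟩ := pow_unbounded_of_one_lt (4 / c) (show 1 < 4 * a by linarith)
  have hmean : ∀ m, m1 ≤ m → k + 1 ≤ m → ∀ V : Idx → Ω → ℝ, IsFam t P V →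
      ∀ y ∈ Set.Icc (-(t / 16)) (t / 16),
      4 ≤ ∫⁻ ω, (ZZ a b (t / 16) m y (fun c => V c ω) : ℝ≥0∞) ∂P := by
    intro m h1 h2 V hV y hy
    refine le_trans ?_ (mean_lower ha0 hb ha2 ht ht0 hV k hk' hy m h2)
    rw [show (4 : ℝ≥0∞) = ENNReal.ofReal 4 by simp]
    apply ENNReal.ofReal_le_ofReal
    have h3 : (4 * a) ^ m1 ≤ (4 * a) ^ m := pow_le_pow_right₀ (by linarith) h1
    rw [div_lt_iff₀ hc0] at hm1
    have h5 := mul_le_mul_of_nonneg_left h3 hc0.le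
    have h6 : 4 ≤ c * (4 * a) ^ m := by linarith
    exact h6
  set m0 := max m1 (k + 1) with hm0
  have hm0a : m1 ≤ m0 := le_max_left _ _
  have hm0b : k + 1 ≤ m0 := le_max_right _ _
  have hp4 : (4 : ℝ) ≤ 4 ^ (2 * m0) := by
    calc (4 : ℝ) = 4 ^ 1 := by norm_num
      _ ≤ _ := pow_le_pow_right₀ (by norm_num) (by omega)
  have hs0 : (0 : ℝ) < 1 / 4 ^ (2 * m0) := by positivity
  have hsm : ∀ l, l ≤ 2 * m0 → (1 / 4 ^ (2 * m0) : ℝ) * 4 ^ l ≤ 1 := by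
    intro l hl
    rw [one_div, inv_mul_le_iff₀ (by positivity), mul_one]
    exact pow_le_pow_right₀ (by norm_num) hl
  refine ⟨m0, by omega, 1 / 4 ^ (2 * m0), hs0, ?_, ?_⟩
  · rw [div_le_div_iff₀ (by positivity) (by norm_num)]; linarith
  intro j l hl1 hl2 x hx
  set s : ℝ := 1 / 4 ^ (2 * m0)
  induction j with
  | zero =>
    simp only [pow_zero, div_one, zero_mul, zero_add]
    exact laplace h l x (hmean l (by omega) (by omega) U h x hx) hs0.le (hsm l (by omega))
  | succ j ih =>
    have hj : (1 : ℝ) ≤ 2 ^ (j + 1) := one_le_pow₀ (by norm_num)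
    have hle : s / 2 ^ (j + 1) ≤ s := div_le_self hs0.le hj
    have hnn : 0 ≤ s / 2 ^ (j + 1) := by positivity
    have h4 : (0 : ℝ) < 4 ^ m0 := by positivity
    have hs1 : s / 2 ^ (j + 1) * 4 ^ m0 ≤ 1 := by
      have := hsm m0 (by omega)
      nlinarith
    rw [show (j + 1) * m0 + l = m0 + (j * m0 + l) by ring]
    refine le_trans (step ha0 hb ht ht0 (by linarith) hnn m0 (s' := s / 2 ^ j) ?_ h _ x) ih
    intro V hV y hy
    refine (laplace hV m0 y (hmean m0 hm0a hm0b V hV y hy) hnn hs1).trans ?_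
    apply ENNReal.ofReal_le_ofReal
    have e : s / 2 ^ j = 2 * (s / 2 ^ (j + 1)) := by rw [pow_succ]; field_simp
    rw [e]
    linarith [Real.add_one_le_exp (-(2 * (s / 2 ^ (j + 1))))]

end prob
end LarssonAux

/-- There exist `ρ > 1`, positive `η, r`, an integer `N` and `0 < K < 1/8` such that for
every `n ≥ N` and every `x ∈ [−K, K]`, the probability that `Z_n^x([−K,K]) > η·ρ^n` is at
least `r`. -/
theorem larsson_uniform_exponential_growth
    (a b : ℝ) (ha : 1 / 4 < a) (hb : 0 < b) (hab : 3 * a + 2 * b < 1)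
    {Ω : Type*} [MeasurableSpace Ω] (P : Measure Ω) [IsProbabilityMeasure P]
    (U : Bool × LarssonWord → Ω → ℝ)
    (hUmeas : ∀ p, Measurable (U p))
    (hUlaw : ∀ p, P.map (U p) =
      (ENNReal.ofReal ((1 - 3 * a - 2 * b) / 2))⁻¹ •
        volume.restrict (Set.Icc 0 ((1 - 3 * a - 2 * b) / 2)))
    (hUindep : iIndepFun U P) :
    ∃ ρ : ℝ, 1 < ρ ∧ ∃ η > (0 : ℝ), ∃ r > (0 : ℝ), ∃ N : ℕ, ∃ K : ℝ,
      0 < K ∧ K < 1 / 8 ∧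
      ∀ n ≥ N, ∀ x ∈ Set.Icc (-K) K,
        ENNReal.ofReal r ≤
          P {ω | η * ρ ^ n <
                  (larssonZ a b (fun w => U (false, w) ω) (fun w => U (true, w) ω) n x
                    (Set.Icc (-K) K) : ℝ)} := by
  have ha0 : 0 < a := by linarith
  set t : ℝ := (1 - 3 * a - 2 * b) / 2 with ht
  have ht0 : 0 < t := by rw [ht]; linarith
  have h : LarssonAux.IsFam t P U := ⟨hUmeas, hUlaw, hUindep⟩
  obtain ⟨m0, hm0, s, hs0, hs1, H⟩ := LarssonAux.final ha hb ht ht0 h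
  have hm0' : m0 ≠ 0 := by omega
  set ρ : ℝ := (2 : ℝ) ^ ((m0 : ℝ)⁻¹) with hρ
  have hρm : ρ ^ m0 = 2 := Real.rpow_inv_natCast_pow (by norm_num) hm0'
  have hρ1 : 1 < ρ := Real.one_lt_rpow (by norm_num) (by positivity)
  refine ⟨ρ, hρ1, 1 / 4, by norm_num, s, hs0, m0, t / 16, by positivity, by linarith, ?_⟩
  intro n hn x hx
  have hset : ∀ ω, larssonZ a b (fun w => U (false, w) ω) (fun w => U (true, w) ω) n x
      (Set.Icc (-(t / 16)) (t / 16)) = LarssonAux.ZZ a b (t / 16) n x (fun c => U c ω) :=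
    fun ω => LarssonAux.larssonZ_eq ha0 n x (fun c => U c ω)
  simp only [hset]
  obtain ⟨j, l, hl1, hl2, hnj⟩ : ∃ j l : ℕ, m0 ≤ l ∧ l < 2 * m0 ∧ n = j * m0 + l := by
    refine ⟨n / m0 - 1, n % m0 + m0, by omega, ?_, ?_⟩
    · have := Nat.mod_lt n (show 0 < m0 by omega)
      omega
    · have h1 : 1 ≤ n / m0 := (Nat.one_le_div_iff (by omega)).2 hn
      obtain ⟨d, hd⟩ := Nat.exists_eq_add_of_le h1
      have h2 := Nat.div_add_mod n m0
      rw [hd] at h2 ⊢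
      rw [Nat.add_sub_cancel_left]
      nlinarith
  have hlap := H j l hl1 hl2 x hx
  rw [← hnj] at hlap
  have hρn : 1 / 4 * ρ ^ n ≤ 2 ^ j := by
    have h1 : ρ ^ l ≤ 4 := by
      calc ρ ^ l ≤ ρ ^ (m0 * 2) := pow_le_pow_right₀ hρ1.le (by omega)
        _ = 4 := by rw [pow_mul, hρm]; norm_num
    rw [hnj, pow_add, mul_comm j, pow_mul, hρm]
    have : (0 : ℝ) < 2 ^ j := by positivity
    nlinarith
  set Z : Ω → ℝ := fun ω => (LarssonAux.ZZ a b (t / 16) n x (fun c => U c ω) : ℝ) with hZ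
  have hZm : Measurable Z := by
    have h1 : Measurable (fun ω => (x, fun c => U c ω)) := measurable_const.prodMk h.measU
    have h2 := (LarssonAux.measurable_ZZ a b (t / 16) n).comp h1
    simp only [Function.comp_def] at h2
    exact h2
  have hG : MeasurableSet {ω | 1 / 4 * ρ ^ n < Z ω} := measurableSet_lt measurable_const hZm
  have hme : Measurable (fun ω => LarssonAux.expZ a b (t / 16) (s / 2 ^ j) n x (fun c => U c ω)) :=
    LarssonAux.measurable_expZ' a b _ _ n measurable_const h.measU
  have hmk := mul_meas_ge_le_lintegral (μ := P) hme (ENNReal.ofReal (Real.exp (-s)))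
  have hsub : {ω | 1 / 4 * ρ ^ n < Z ω}ᶜ ⊆ {ω | ENNReal.ofReal (Real.exp (-s)) ≤
      LarssonAux.expZ a b (t / 16) (s / 2 ^ j) n x (fun c => U c ω)} := by
    intro ω hω
    simp only [Set.mem_compl_iff, Set.mem_ofPred_eq, not_lt] at hω ⊢
    unfold LarssonAux.expZ
    apply ENNReal.ofReal_le_ofReal
    apply Real.exp_le_exp.2
    rw [neg_le_neg_iff]
    have h2 : (0 : ℝ) < 2 ^ j := by positivity
    have h3 : Z ω ≤ 2 ^ j := hω.trans hρn
    rw [div_mul_eq_mul_div, div_le_iff₀ h2]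
    exact mul_le_mul_of_nonneg_left h3 hs0.le
  have hbad : P {ω | 1 / 4 * ρ ^ n < Z ω}ᶜ ≤ ENNReal.ofReal (1 - s) := by
    have h1 : ENNReal.ofReal (Real.exp (-s)) * P {ω | 1 / 4 * ρ ^ n < Z ω}ᶜ
        ≤ ENNReal.ofReal (Real.exp (-s)) * ENNReal.ofReal (1 - s) := by
      refine (mul_le_mul_right (measure_mono hsub) _).trans ((hmk.trans hlap).trans ?_)
      rw [← ENNReal.ofReal_mul (Real.exp_pos _).le]
      apply ENNReal.ofReal_le_ofReal
      nlinarith [Real.add_one_le_exp (-s)]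
    rwa [ENNReal.mul_le_mul_iff_right (by simpa using Real.exp_pos _) ENNReal.ofReal_ne_top] at h1
  have hone : P {ω | 1 / 4 * ρ ^ n < Z ω}ᶜ + P {ω | 1 / 4 * ρ ^ n < Z ω} = 1 := by
    rw [add_comm, measure_add_measure_compl hG, measure_univ]
  have hfin : ENNReal.ofReal (1 - s) + ENNReal.ofReal s
      ≤ ENNReal.ofReal (1 - s) + P {ω | 1 / 4 * ρ ^ n < Z ω} := by
    rw [← ENNReal.ofReal_add (by linarith) hs0.le, sub_add_cancel, ENNReal.ofReal_one, ← hone]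
    gcongr
  exact (ENNReal.add_le_add_iff_left ENNReal.ofReal_ne_top).1 hfin
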